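/- Let G be a simple graph on n ≥ 3 vertices that is outer 5-planar, i.e., its vertices can be arranged in a cyclic order (equivalently, placed in convex position with straight-line edges) such that every edge is crossed by at most 5 other edges. Then G has at most 4n − 9 edges. -/

import Mathlib

/-- `x` lies strictly between `a` and `b` in the cyclic order of `Fin n`
(going forward from `a` to `b` along the cycle). -/
def cycBtw (n : ℕ) (a b x : Fin n) : Prop :=
  0 < (x.val + n - a.val) % n ∧ (x.val + n - a.val) % n < (b.val + n - a.val) % n

/-- Two edges `e` and `f` cross in the cyclic order determined by the positions `σ`:
they have four distinct endpoints and the endpoints interleave, i.e. exactly one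
endpoint of `f` lies strictly between the endpoints of `e`. -/
def crossing (n : ℕ) (σ : Fin n → Fin n) (e f : Sym2 (Fin n)) : Prop :=
  ∃ a b c d : Fin n, e = s(a, b) ∧ f = s(c, d) ∧
    a ≠ b ∧ c ≠ d ∧ a ≠ c ∧ a ≠ d ∧ b ≠ c ∧ b ≠ d ∧
    (cycBtw n (σ a) (σ b) (σ c) ↔ ¬ cycBtw n (σ a) (σ b) (σ d))

/-- With respect to the cyclic order given by positions `σ`, every edge of `G`
is crossed by at most `k` other edges. -/
def OuterKPlanarOrd (n k : ℕ) (σ : Fin n → Fin n) (G : SimpleGraph (Fin n)) : Prop :=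
  ∀ e ∈ G.edgeSet, ({f ∈ G.edgeSet | crossing n σ e f}).ncard ≤ k

/-- `G` is outer `k`-planar: its vertices can be arranged in a cyclic order such
that every edge is crossed by at most `k` other edges. -/
def IsOuterKPlanar (n k : ℕ) (G : SimpleGraph (Fin n)) : Prop :=
  ∃ σ : Fin n ≃ Fin n, OuterKPlanarOrd n k (⇑σ) G

/-- The numerical contradiction for a window with four inner points; `xij` counts the edge between
the points `i` and `j` of the window, and `oi` the edges leaving the window at `i`. -/
theorem arith_four
    (x02 x03 x04 x13 x14 x15 x24 x25 x35 o1 o2 o3 o4 : ℕ)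
    (b02 : x02 ≤ 1) (b03 : x03 ≤ 1) (b04 : x04 ≤ 1) (b13 : x13 ≤ 1) (b14 : x14 ≤ 1)
    (b15 : x15 ≤ 1) (b24 : x24 ≤ 1) (b25 : x25 ≤ 1) (b35 : x35 ≤ 1)
    (tot : 9 + 3 ≤ x02 + x03 + x04 + x13 + x14 + x15 + x24 + x25 + x35 + (o1 + o2 + o3 + o4))
    (out : o1 + o2 + o3 + o4 ≤ 5)
    (c03 : x03 = 1 → x14 + x15 + x24 + x25 + (o1 + o2) ≤ 5)
    (c04 : x04 = 1 → x15 + x25 + x35 + (o1 + o2 + o3) ≤ 5)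
    (c14 : x14 = 1 → x02 + x03 + x25 + x35 + (o2 + o3) ≤ 5)
    (c15 : x15 = 1 → x02 + x03 + x04 + (o2 + o3 + o4) ≤ 5)
    (c25 : x25 = 1 → x03 + x13 + x04 + x14 + (o3 + o4) ≤ 5)
    (c02 : x02 = 1 → x13 + x14 + x15 + o1 ≤ 5)
    (c13 : x13 = 1 → x02 + x24 + x25 + o2 ≤ 5)
    (c35 : x35 = 1 → x04 + x14 + x24 + o4 ≤ 5)
    (d1 : 5 ≤ x13 + x14 + x15 + 2 + o1)
    (d4 : 5 ≤ x04 + x14 + x24 + 2 + o4)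
    (d2 : 5 ≤ x02 + x24 + x25 + 2 + o2)
    (d3 : 5 ≤ x03 + x13 + x35 + 2 + o3)
    (m23 : x14 = 0 → 10 ≤ x02 + x03 + x13 + x24 + x25 + x35 + 3 + (o2 + o3))
    (l3 : 1 ≤ o3 → 2 ≤ o1 → x04 + x14 + x24 + x15 + x25 + 2 ≤ 5)
    (r3 : 1 ≤ o3 → 2 ≤ o4 → x04 + x14 + x24 + x15 + x25 + 2 ≤ 5)
    (lr3 : 1 ≤ o3 → 2 ≤ o1 → 2 ≤ o4 → x04 + x14 + x24 + x15 + x25 + 3 ≤ 5)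
    (l2 : 1 ≤ o2 → 2 ≤ o1 → x03 + x13 + x04 + x14 + x15 + 2 ≤ 5)
    (r2 : 1 ≤ o2 → 2 ≤ o4 → x03 + x13 + x04 + x14 + x15 + 2 ≤ 5)
    (lr2 : 1 ≤ o2 → 2 ≤ o1 → 2 ≤ o4 → x03 + x13 + x04 + x14 + x15 + 3 ≤ 5) : False := by
  grind

/-- The numerical contradiction for a window with five inner points. -/
theorem arith_five
    (x02 x03 x04 x13 x14 x15 x24 x25 x26 x35 x36 x46 o1 o2 o3 o4 o5 : ℕ)
    (b02 : x02 ≤ 1) (b03 : x03 ≤ 1) (b04 : x04 ≤ 1) (b13 : x13 ≤ 1) (b14 : x14 ≤ 1)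
    (b15 : x15 ≤ 1) (b24 : x24 ≤ 1) (b25 : x25 ≤ 1) (b26 : x26 ≤ 1) (b35 : x35 ≤ 1)
    (b36 : x36 ≤ 1) (b46 : x46 ≤ 1)
    (tot : 12 + 3 ≤ x02 + x03 + x04 + x13 + x14 + x15 + x24 + x25 + x26 + x35 + x36 + x46
      + (o1 + o2 + o3 + o4 + o5))
    (out : o1 + o2 + o3 + o4 + o5 ≤ 5)
    (c03 : x03 = 1 → x14 + x15 + x24 + x25 + x26 + (o1 + o2) ≤ 5)
    (c36 : x36 = 1 → x04 + x14 + x24 + x15 + x25 + (o4 + o5) ≤ 5)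
    (c02 : x02 = 1 → x13 + x14 + x15 + o1 ≤ 5)
    (c46 : x46 = 1 → x15 + x25 + x35 + o5 ≤ 5)
    (c04 : x04 = 1 → x15 + x25 + x26 + x35 + x36 + (o1 + o2 + o3) ≤ 5)
    (c14 : x14 = 1 → x02 + x03 + x25 + x26 + x35 + x36 + (o2 + o3) ≤ 5)
    (c15 : x15 = 1 → x02 + x03 + x04 + x26 + x36 + x46 + (o2 + o3 + o4) ≤ 5)
    (c25 : x25 = 1 → x03 + x13 + x04 + x14 + x36 + x46 + (o3 + o4) ≤ 5)
    (c26 : x26 = 1 → x03 + x13 + x04 + x14 + x15 + (o3 + o4 + o5) ≤ 5) : False := by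
  grind

/-- The numerical contradiction for a window with at least six inner points. -/
theorem arith_six
    (x03 x04 x13 x14 x15 x25 x26 x35 x36 x37 x46 x47 x57 x02 : ℕ) (o : ℕ)
    (b03 : x03 ≤ 1) (b04 : x04 ≤ 1) (b13 : x13 ≤ 1) (b14 : x14 ≤ 1)
    (b15 : x15 ≤ 1) (b25 : x25 ≤ 1) (b26 : x26 ≤ 1) (b35 : x35 ≤ 1)
    (b36 : x36 ≤ 1) (b46 : x46 ≤ 1) (b37 : x37 ≤ 1) (b47 : x47 ≤ 1) (b57 : x57 ≤ 1)
    (b02 : x02 ≤ 1)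
    (tot : 14 + 3 ≤ x02 + x03 + x04 + x13 + x14 + x15 + x25 + x26 + x35 + x36 + x37 + x46 + x47
      + x57 + o)
    (out : o ≤ 5)
    (c14 : x14 = 1 → x02 + x03 + x25 + x26 + x35 + x36 + x37 ≤ 5)
    (c15 : x15 = 1 → x02 + x03 + x04 + x26 + x36 + x37 + x46 + x47 ≤ 5)
    (c26 : x26 = 1 → x03 + x13 + x37 + x04 + x14 + x47 + x15 + x57 ≤ 5) : False := by
  grind

/-- A window with four inner points has at most `12` edges of the kinds counted here. -/
theorem arith_four_tight
    (x02 x03 x04 x13 x14 x15 x24 x25 x35 o1 o2 o3 o4 : ℕ)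
    (b02 : x02 ≤ 1) (b03 : x03 ≤ 1) (b04 : x04 ≤ 1) (b13 : x13 ≤ 1) (b14 : x14 ≤ 1)
    (b15 : x15 ≤ 1) (b24 : x24 ≤ 1) (b25 : x25 ≤ 1) (b35 : x35 ≤ 1)
    (tot : 12 < x02 + x03 + x04 + x13 + x14 + x15 + x24 + x25 + x35 + (o1 + o2 + o3 + o4))
    (out : o1 + o2 + o3 + o4 ≤ 5)
    (c03 : x03 = 1 → x14 + x15 + x24 + x25 + (o1 + o2) ≤ 5)
    (c04 : x04 = 1 → x15 + x25 + x35 + (o1 + o2 + o3) ≤ 5)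
    (c15 : x15 = 1 → x02 + x03 + x04 + (o2 + o3 + o4) ≤ 5)
    (c25 : x25 = 1 → x03 + x13 + x04 + x14 + (o3 + o4) ≤ 5) : False := by
  grind

/-- Interleaving of two pairs of a linear order, each written with the smaller entry first. -/
abbrev Interleave (e f : ℕ × ℕ) : Prop :=
  (e.1 < f.1 ∧ f.1 < e.2 ∧ e.2 < f.2) ∨ (f.1 < e.1 ∧ e.1 < f.2 ∧ f.2 < e.2)

/-- A convex drawing on the points `0, …, n - 1` whose edges are the increasing pairs in `E`,
each of them crossed at most five times. -/
structure FiveDrawing (n : ℕ) (E : Finset (ℕ × ℕ)) : Prop where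
  lt : ∀ e ∈ E, e.1 < e.2
  bound : ∀ e ∈ E, e.2 < n
  crossings : ∀ e ∈ E, (E.filter (Interleave e)).card ≤ 5

/-- A drawing with all its hull edges, at least `4n - 8` edges, and no smaller such example. -/
structure MinimalDense (n : ℕ) (E : Finset (ℕ × ℕ)) : Prop extends FiveDrawing n E where
  six_le : 6 ≤ n
  dense : 4 * n ≤ E.card + 8
  hull : (0, n - 1) ∈ E
  side : ∀ i, i + 1 < n → (i, i + 1) ∈ E
  minimal : ∀ n' E', 3 ≤ n' → n' < n → FiveDrawing n' E' → E'.card ≤ 4 * n' - 9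

/-- The increasing pair with entries `x` and `y`. -/
def sortedPair (x y : ℕ) : ℕ × ℕ := (min x y, max x y)

theorem FiveDrawing.image {n n' : ℕ} {E F : Finset (ℕ × ℕ)} (h : FiveDrawing n E) (hF : F ⊆ E)
    {φ : ℕ → ℕ} (hφ : Monotone φ) (hlt : ∀ e ∈ F, φ e.1 < φ e.2) (hn : ∀ e ∈ F, φ e.2 < n') :
    FiveDrawing n' (F.image (Prod.map φ φ)) := by
  refine ⟨?_, ?_, ?_⟩
  · simp only [Finset.mem_image]
    rintro _ ⟨e, he, rfl⟩
    exact hlt e he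
  · simp only [Finset.mem_image]
    rintro _ ⟨e, he, rfl⟩
    exact hn e he
  · simp only [Finset.mem_image]
    rintro _ ⟨e, he, rfl⟩
    refine le_trans ?_ (h.crossings e (hF he))
    refine le_trans (Finset.card_le_card ?_)
      (Finset.card_image_le (s := E.filter (Interleave e)) (f := Prod.map φ φ))
    intro f' hf'
    simp only [Finset.mem_filter, Finset.mem_image] at hf'
    obtain ⟨⟨f, hf, rfl⟩, hc⟩ := hf'
    refine Finset.mem_image.2 ⟨f, Finset.mem_filter.2 ⟨hF hf, ?_⟩, rfl⟩
    simpa only [Interleave, Prod.map_fst, Prod.map_snd] using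
      hc.imp (fun h => ⟨hφ.reflect_lt h.1, hφ.reflect_lt h.2.1, hφ.reflect_lt h.2.2⟩)
        (fun h => ⟨hφ.reflect_lt h.1, hφ.reflect_lt h.2.1, hφ.reflect_lt h.2.2⟩)

theorem MinimalDense.card_deleted {n n' : ℕ} {E D : Finset (ℕ × ℕ)} (h : MinimalDense n E)
    (hn' : 3 ≤ n') (hlt' : n' < n) {φ : ℕ → ℕ} (hφ : Monotone φ)
    (hlt : ∀ e ∈ E \ D, φ e.1 < φ e.2) (hn : ∀ e ∈ E \ D, φ e.2 < n')
    (hinj : Set.InjOn (Prod.map φ φ) (E \ D : Finset (ℕ × ℕ))) :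
    4 * (n - n') + 1 ≤ D.card := by
  have h1 := h.minimal n' _ hn' hlt' (h.toFiveDrawing.image Finset.sdiff_subset hφ hlt hn)
  rw [Finset.card_image_of_injOn hinj] at h1
  have h2 := Finset.le_card_sdiff D E
  have h3 := h.dense
  omega

/-- The edges with an endpoint strictly between `p` and `q`. -/
def incident (E : Finset (ℕ × ℕ)) (p q : ℕ) : Finset (ℕ × ℕ) :=
  E.filter fun e => (p < e.1 ∧ e.1 < q) ∨ (p < e.2 ∧ e.2 < q)

/-- The monotone retraction onto the complement of the open interval `(p, q)` which sends
the points up to `t` to `p` and the others to `q`. -/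
def pushOut (p q t x : ℕ) : ℕ := if x ≤ t then min x p else max x q

theorem pushOut_monotone {p q t : ℕ} (hpq : p ≤ q) : Monotone (pushOut p q t) := by
  intro x y hxy
  unfold pushOut
  split_ifs <;> omega

/-- The strictly monotone renumbering of the complement of the open interval `(p, q)`. -/
def closeUp (p q x : ℕ) : ℕ := if x ≤ p then x else x - (q - p - 1)

theorem MinimalDense.card_incident_aux {n p q t : ℕ} {E D : Finset (ℕ × ℕ)}
    (h : MinimalDense n E) (hp : p + 2 ≤ q) (hq : q < n) (hn : 2 + q ≤ n + p)
    (hlt : ∀ e ∈ E \ D, pushOut p q t e.1 < pushOut p q t e.2)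
    (hinj : ∀ e ∈ E \ D, ∀ f ∈ E \ D, pushOut p q t e.1 = pushOut p q t f.1 →
      pushOut p q t e.2 = pushOut p q t f.2 → e = f) :
    4 * (q - p - 1) + 1 ≤ D.card := by
  have hoff : ∀ x, pushOut p q t x ≤ p ∨ q ≤ pushOut p q t x := by
    intro x; unfold pushOut; split_ifs <;> omega
  have hmono := pushOut_monotone (t := t) (show p ≤ q by omega)
  have key := h.card_deleted (n' := n - (q - p - 1)) (D := D) (by omega) (by omega)
    (φ := fun x => closeUp p q (pushOut p q t x)) ?_ ?_ ?_ ?_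
  · have : n - (n - (q - p - 1)) = q - p - 1 := by omega
    rwa [this] at key
  · intro x y hxy
    have := hmono hxy
    have := hoff x
    have := hoff y
    simp only [closeUp]
    split_ifs <;> omega
  · intro e he
    have := hlt e he
    have := hoff e.1
    have := hoff e.2
    simp only [closeUp]
    split_ifs <;> omega
  · intro e he
    have h1 := h.bound e (Finset.sdiff_subset he)
    have h2 : pushOut p q t e.2 < n := by
      unfold pushOut; split_ifs <;> omega
    have := hoff e.2
    simp only [closeUp]
    split_ifs <;> omega
  · intro e he f hf hef
    have inj : ∀ x y, closeUp p q (pushOut p q t x) = closeUp p q (pushOut p q t y) →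
        pushOut p q t x = pushOut p q t y := by
      intro x y
      have := hoff x
      have := hoff y
      simp only [closeUp]
      split_ifs <;> omega
    exact hinj e he f hf (inj _ _ (congrArg Prod.fst hef)) (inj _ _ (congrArg Prod.snd hef))

theorem pushOut_of_off {p q t x : ℕ} (ht : p ≤ t) (htq : t < q) (hx : x ≤ p ∨ q ≤ x) :
    pushOut p q t x = x := by
  unfold pushOut; split_ifs <;> omega

theorem off_of_notMem_incident {E : Finset (ℕ × ℕ)} {p q : ℕ} {e : ℕ × ℕ} (he : e ∈ E)
    (hi : e ∉ incident E p q) : (e.1 ≤ p ∨ q ≤ e.1) ∧ (e.2 ≤ p ∨ q ≤ e.2) := by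
  simp only [incident, Finset.mem_filter, he, true_and] at hi
  omega

/-- Deleting the points of an open interval must delete many edges. -/
theorem MinimalDense.card_incident {n p q : ℕ} {E : Finset (ℕ × ℕ)}
    (h : MinimalDense n E) (hp : p + 2 ≤ q) (hq : q < n) (hn : 2 + q ≤ n + p) :
    4 * (q - p - 1) + 1 ≤ (incident E p q).card := by
  have off : ∀ e ∈ E \ incident E p q, (e.1 ≤ p ∨ q ≤ e.1) ∧ (e.2 ≤ p ∨ q ≤ e.2) := by
    intro e he
    exact off_of_notMem_incident (Finset.mem_sdiff.1 he).1 (Finset.mem_sdiff.1 he).2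
  have fix : ∀ x, (x ≤ p ∨ q ≤ x) → pushOut p q p x = x :=
    fun x hx => pushOut_of_off le_rfl (by omega) hx
  refine h.card_incident_aux (t := p) hp hq hn ?_ ?_
  · intro e he
    rw [fix _ (off e he).1, fix _ (off e he).2]
    exact h.lt e (Finset.sdiff_subset he)
  · intro e he f hf h1 h2
    rw [fix _ (off e he).1, fix _ (off f hf).1] at h1
    rw [fix _ (off e he).2, fix _ (off f hf).2] at h2
    exact Prod.ext h1 h2

/-- If one of the deleted edges can be rerouted to a new edge on the remaining points, then
one edge more must be deleted. -/
theorem MinimalDense.card_incident_of_reroute {n p q t : ℕ} {E : Finset (ℕ × ℕ)}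
    (h : MinimalDense n E) (hp : p + 2 ≤ q) (hq : q < n) (hn : 2 + q ≤ n + p)
    (ht : p ≤ t) (htq : t < q) {e₀ : ℕ × ℕ} (he₀ : e₀ ∈ incident E p q)
    (hlt : pushOut p q t e₀.1 < pushOut p q t e₀.2)
    (hnew : (pushOut p q t e₀.1, pushOut p q t e₀.2) ∉ E) :
    4 * (q - p - 1) + 2 ≤ (incident E p q).card := by
  have off : ∀ e ∈ E \ (incident E p q).erase e₀, e = e₀ ∨
      ((e.1 ≤ p ∨ q ≤ e.1) ∧ (e.2 ≤ p ∨ q ≤ e.2)) := by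
    intro e he
    by_cases hee : e = e₀
    · exact Or.inl hee
    · refine Or.inr (off_of_notMem_incident (Finset.mem_sdiff.1 he).1 fun hi => ?_)
      exact (Finset.mem_sdiff.1 he).2 (Finset.mem_erase.2 ⟨hee, hi⟩)
  have fix : ∀ x, (x ≤ p ∨ q ≤ x) → pushOut p q t x = x :=
    fun x hx => pushOut_of_off ht htq hx
  have key : 4 * (q - p - 1) + 1 ≤ ((incident E p q).erase e₀).card := by
    refine h.card_incident_aux (t := t) hp hq hn ?_ ?_
    · intro e he
      rcases off e he with rfl | ho
      · exact hlt
      · rw [fix _ ho.1, fix _ ho.2]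
        exact h.lt e (Finset.sdiff_subset he)
    · intro e he f hf h1 h2
      rcases off e he with rfl | ho <;> rcases off f hf with rfl | ho'
      · rfl
      · rw [fix f.1 ho'.1] at h1
        rw [fix f.2 ho'.2] at h2
        rw [h1, h2] at hnew
        exact absurd (Finset.sdiff_subset hf) hnew
      · rw [fix e.1 ho.1] at h1
        rw [fix e.2 ho.2] at h2
        rw [← h1, ← h2] at hnew
        exact absurd (Finset.sdiff_subset he) hnew
      · rw [fix _ ho.1, fix _ ho'.1] at h1
        rw [fix _ ho.2, fix _ ho'.2] at h2
        exact Prod.ext h1 h2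
  rw [Finset.card_erase_of_mem he₀] at key
  omega

/-- The indicator of the edge between the points `a + i` and `a + j`. -/
def edgeInd (E : Finset (ℕ × ℕ)) (a i j : ℕ) : ℕ := if (a + i, a + j) ∈ E then 1 else 0

theorem edgeInd_le_one (E : Finset (ℕ × ℕ)) (a i j : ℕ) : edgeInd E a i j ≤ 1 := by
  unfold edgeInd; split_ifs <;> omega

theorem mem_of_edgeInd {E : Finset (ℕ × ℕ)} {a i j : ℕ} (h : edgeInd E a i j = 1) :
    (a + i, a + j) ∈ E := by
  unfold edgeInd at h; split_ifs at h; assumption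

theorem notMem_of_edgeInd {E : Finset (ℕ × ℕ)} {a i j : ℕ} (h : edgeInd E a i j = 0) :
    (a + i, a + j) ∉ E := by
  unfold edgeInd at h; split_ifs at h; assumption

/-- The neighbours of `a + i` outside the interval `[a, b]`. -/
def outNbrs (n : ℕ) (E : Finset (ℕ × ℕ)) (a b i : ℕ) : Finset ℕ :=
  (Finset.range n).filter fun x => (x < a ∨ b < x) ∧ sortedPair (a + i) x ∈ E

/-- The edges `(a + k.1, a + k.2)` with `k ∈ K`, and those joining some `a + i` with `i ∈ S` to a
point outside `[a, b]`. -/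
def localEdges (n : ℕ) (E : Finset (ℕ × ℕ)) (a b : ℕ) (K : Finset (ℕ × ℕ)) (S : Finset ℕ) :
    Finset (ℕ × ℕ) :=
  (K.filter fun k => (a + k.1, a + k.2) ∈ E).image (fun k => (a + k.1, a + k.2)) ∪
    S.biUnion fun i => (outNbrs n E a b i).image (sortedPair (a + i))

theorem mem_localEdges {n : ℕ} {E : Finset (ℕ × ℕ)} {a b : ℕ} {K : Finset (ℕ × ℕ)} {S : Finset ℕ}
    {e : ℕ × ℕ} : e ∈ localEdges n E a b K S ↔ e ∈ E ∧
      ((∃ k ∈ K, e = (a + k.1, a + k.2)) ∨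
        ∃ i ∈ S, ∃ x < n, (x < a ∨ b < x) ∧ e = sortedPair (a + i) x) := by
  simp only [localEdges, outNbrs, Finset.mem_union, Finset.mem_image, Finset.mem_biUnion,
    Finset.mem_filter, Finset.mem_range]
  constructor
  · rintro (⟨k, ⟨hk, hE⟩, rfl⟩ | ⟨i, hi, x, ⟨hx, ho, hE⟩, rfl⟩)
    · exact ⟨hE, Or.inl ⟨k, hk, rfl⟩⟩
    · exact ⟨hE, Or.inr ⟨i, hi, x, hx, ho, rfl⟩⟩
  · rintro ⟨hE, ⟨k, hk, rfl⟩ | ⟨i, hi, x, hx, ho, rfl⟩⟩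
    · exact Or.inl ⟨k, ⟨hk, hE⟩, rfl⟩
    · exact Or.inr ⟨i, hi, x, ⟨hx, ho, hE⟩, rfl⟩

theorem sortedPair_eq_iff {x y z w : ℕ} :
    sortedPair x y = sortedPair z w ↔ (x = z ∧ y = w) ∨ (x = w ∧ y = z) := by
  simp only [sortedPair, Prod.mk.injEq]
  omega

theorem card_localEdges {n : ℕ} {E : Finset (ℕ × ℕ)} {a b : ℕ} {K : Finset (ℕ × ℕ)}
    {S : Finset ℕ} (hK : ∀ k ∈ K, a + k.1 ≤ b ∧ a + k.2 ≤ b) (hS : ∀ i ∈ S, a + i ≤ b) :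
    (localEdges n E a b K S).card =
      ∑ k ∈ K, edgeInd E a k.1 k.2 + ∑ i ∈ S, (outNbrs n E a b i).card := by
  have out : ∀ {i x}, x ∈ outNbrs n E a b i → x < a ∨ b < x := by
    intro i x hx
    exact (Finset.mem_filter.1 hx).2.1
  unfold localEdges
  rw [Finset.card_union_of_disjoint, Finset.card_biUnion]
  · congr 1
    · rw [Finset.card_image_of_injective, Finset.card_filter]
      · rfl
      · rintro ⟨x, y⟩ ⟨z, w⟩ h
        simpa using h
    · refine Finset.sum_congr rfl fun i hi => Finset.card_image_of_injOn ?_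
      intro x hx y hy hxy
      have := out hx
      have := hS i hi
      rcases sortedPair_eq_iff.1 hxy with h | h <;> omega
  · intro i hi j hj hij
    simp only [Finset.disjoint_left, Finset.mem_image]
    rintro _ ⟨x, hx, rfl⟩ ⟨y, hy, hxy⟩
    have := out hx
    have := out hy
    have := hS i hi
    have := hS j hj
    rcases sortedPair_eq_iff.1 hxy with h | h <;> omega
  · simp only [Finset.disjoint_left, Finset.mem_image, Finset.mem_biUnion, Finset.mem_filter,
      not_exists, not_and]
    rintro _ ⟨k, ⟨hk, -⟩, rfl⟩ i hi x hx hxy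
    have := out hx
    have := hS i hi
    have := hK k hk
    simp only [sortedPair, Prod.mk.injEq] at hxy
    omega

/-- A shortest edge spanning at least five sides on its inner side. -/
structure ShortestLong (n : ℕ) (E : Finset (ℕ × ℕ)) (a b : ℕ) : Prop where
  mem : (a, b) ∈ E
  five_le : a + 5 ≤ b
  lt : b < n
  short : ∀ e ∈ E, a ≤ e.1 → e.2 ≤ b → e ≠ (a, b) → e.2 ≤ e.1 + 4

theorem MinimalDense.exists_shortestLong {n : ℕ} {E : Finset (ℕ × ℕ)} (h : MinimalDense n E) :
    ∃ a b, ShortestLong n E a b := by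
  obtain ⟨⟨a, b⟩, hab, hmin⟩ := Finset.exists_min_image (E.filter fun e => e.1 + 5 ≤ e.2)
    (fun e => e.2 - e.1) ⟨(0, n - 1), by
      have := h.six_le
      simp only [Finset.mem_filter, h.hull, true_and]
      omega⟩
  simp only [Finset.mem_filter] at hab
  refine ⟨a, b, hab.1, hab.2, h.bound _ hab.1, fun e he h1 h2 hne => ?_⟩
  by_contra hlong
  have h3 := hmin e (Finset.mem_filter.2 ⟨he, by omega⟩)
  refine hne (Prod.ext ?_ ?_) <;> simp only at h3 ⊢ <;> omega

/-- The pairs of distance at most four in `{0, …, l}`. -/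
def shortPairs (l : ℕ) : Finset (ℕ × ℕ) :=
  (Finset.range (l + 1) ×ˢ Finset.range (l + 1)).filter fun k => k.1 < k.2 ∧ k.2 ≤ k.1 + 4

theorem mem_shortPairs {l : ℕ} {k : ℕ × ℕ} :
    k ∈ shortPairs l ↔ k.1 < k.2 ∧ k.2 ≤ k.1 + 4 ∧ k.2 ≤ l := by
  simp only [shortPairs, Finset.mem_filter, Finset.mem_product, Finset.mem_range]
  omega

theorem card_shortPairs_le {l : ℕ} (hl : 4 ≤ l) : (shortPairs l).card ≤ 4 * l - 6 := by
  have hsub : shortPairs l ⊆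
      (Finset.Icc 1 4).biUnion fun d => (Finset.range (l + 1 - d)).image fun x => (x, x + d) := by
    rintro ⟨x, y⟩ hk
    have := mem_shortPairs.1 hk
    simp only [Finset.mem_biUnion, Finset.mem_Icc, Finset.mem_image, Finset.mem_range,
      Prod.mk.injEq]
    exact ⟨y - x, by omega, x, by omega, rfl, by omega⟩
  calc (shortPairs l).card ≤ ∑ d ∈ Finset.Icc 1 4, (l + 1 - d) := by
        refine (Finset.card_le_card hsub).trans (Finset.card_biUnion_le.trans ?_)
        refine Finset.sum_le_sum fun d _ => Finset.card_image_le.trans ?_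
        rw [Finset.card_range]
    _ ≤ 4 * l - 6 := by
        rw [show Finset.Icc 1 4 = {1, 2, 3, 4} by decide]
        simp
        omega

/-- The edges inside the window across `(a + p, a + q)`, together with the edges leaving the
window from between these points, number at most five. -/
theorem MinimalDense.crossing_le {n : ℕ} {E : Finset (ℕ × ℕ)} {a b : ℕ}
    (h : MinimalDense n E) {p q : ℕ}
    (hp : p < q) (hq : a + q ≤ b)
    (hmem : (a + p, a + q) ∈ E) {K : Finset (ℕ × ℕ)}
    (hK : ∀ k ∈ K, Interleave (p, q) k ∧ a + k.2 ≤ b) :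
    ∑ k ∈ K, edgeInd E a k.1 k.2 + ∑ i ∈ Finset.Ioo p q, (outNbrs n E a b i).card ≤ 5 := by
  rw [← card_localEdges]
  · refine le_trans (Finset.card_le_card ?_) (h.crossings _ hmem)
    intro e he
    obtain ⟨heE, ⟨k, hk, rfl⟩ | ⟨i, hi, x, hx, ho, rfl⟩⟩ := mem_localEdges.1 he
    · refine Finset.mem_filter.2 ⟨heE, ?_⟩
      have := hK k hk
      simp only [Interleave] at this ⊢
      omega
    · refine Finset.mem_filter.2 ⟨heE, ?_⟩
      have := Finset.mem_Ioo.1 hi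
      simp only [Interleave, sortedPair]
      omega
  · intro k hk
    have := hK k hk
    simp only [Interleave] at this
    omega
  · intro i hi
    have := Finset.mem_Ioo.1 hi
    omega

namespace ShortestLong

variable {n : ℕ} {E : Finset (ℕ × ℕ)} {a b : ℕ}

theorem exists_of_inside (w : ShortestLong n E a b) (h : MinimalDense n E) {e : ℕ × ℕ}
    (he : e ∈ E) (h1 : a ≤ e.1) (h2 : e.2 ≤ b) (hne : e ≠ (a, b)) :
    ∃ k ∈ shortPairs (b - a), e = (a + k.1, a + k.2) := by
  have := w.short e he h1 h2 hne
  have := h.lt e he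
  refine ⟨(e.1 - a, e.2 - a), mem_shortPairs.2 ?_, Prod.ext ?_ ?_⟩ <;> simp only <;> omega

theorem lt_hull (w : ShortestLong n E a b) (h : MinimalDense n E) : 2 + b ≤ n + a := by
  by_contra hcon
  have ha : a = 0 := by have := w.lt; omega
  have hb : b = n - 1 := by have := w.lt; omega
  subst ha
  subst hb
  have hn := h.six_le
  have hsub : E ⊆ insert (0, n - 1) ((shortPairs (n - 1)).image fun k => (0 + k.1, 0 + k.2)) := by
    intro e he
    rw [Finset.mem_insert, Finset.mem_image]
    by_cases hne : e = (0, n - 1)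
    · exact Or.inl hne
    · obtain ⟨k, hk, hek⟩ := w.exists_of_inside h he (Nat.zero_le _)
        (by have := h.bound e he; omega) hne
      exact Or.inr ⟨k, hk, hek.symm⟩
  have h1 := Finset.card_le_card hsub
  have h2 := Finset.card_insert_le (0, n - 1)
    ((shortPairs (n - 1)).image fun k => (0 + k.1, 0 + k.2))
  have h3 := Finset.card_image_le (s := shortPairs (n - 1)) (f := fun k => (0 + k.1, 0 + k.2))
  have h4 := card_shortPairs_le (l := n - 1) (by omega)
  have h5 := h.dense
  omega

theorem incident_subset (w : ShortestLong n E a b) (h : MinimalDense n E) {p q : ℕ}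
    (hq : a + q ≤ b) {K : Finset (ℕ × ℕ)}
    (hK : ∀ k ∈ shortPairs (b - a), (p < k.1 ∧ k.1 < q) ∨ (p < k.2 ∧ k.2 < q) → k ∈ K) :
    incident E (a + p) (a + q) ⊆ localEdges n E a b K (Finset.Ioo p q) := by
  intro e he
  obtain ⟨heE, hinc⟩ := Finset.mem_filter.1 he
  refine mem_localEdges.2 ⟨heE, ?_⟩
  have hlt := h.lt e heE
  have hb := h.bound e heE
  by_cases hin : a ≤ e.1 ∧ e.2 ≤ b
  · left
    obtain ⟨k, hk, hek⟩ := w.exists_of_inside h heE hin.1 hin.2 (by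
      rintro rfl
      simp only at hinc
      omega)
    rw [hek] at hinc
    refine ⟨k, hK k hk ?_, hek⟩
    simp only at hinc
    omega
  · right
    by_cases h1 : a + p < e.1 ∧ e.1 < a + q
    · refine ⟨e.1 - a, Finset.mem_Ioo.2 (by omega), e.2, hb, by omega, ?_⟩
      refine Prod.ext ?_ ?_ <;> simp only [sortedPair] <;> omega
    · refine ⟨e.2 - a, Finset.mem_Ioo.2 (by omega), e.1, by omega, by omega, ?_⟩
      refine Prod.ext ?_ ?_ <;> simp only [sortedPair] <;> omega

theorem card_incident_le (w : ShortestLong n E a b) (h : MinimalDense n E) {p q : ℕ}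
    (hq : a + q ≤ b) {K : Finset (ℕ × ℕ)} (hKs : K ⊆ shortPairs (b - a))
    (hK : ∀ k ∈ shortPairs (b - a), (p < k.1 ∧ k.1 < q) ∨ (p < k.2 ∧ k.2 < q) → k ∈ K) :
    (incident E (a + p) (a + q)).card ≤
      ∑ k ∈ K, edgeInd E a k.1 k.2 + ∑ i ∈ Finset.Ioo p q, (outNbrs n E a b i).card := by
  rw [← card_localEdges]
  · exact Finset.card_le_card (w.incident_subset h hq hK)
  · intro k hk
    have := mem_shortPairs.1 (hKs hk)
    have := w.five_le
    omega
  · intro i hi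
    have := Finset.mem_Ioo.1 hi
    omega

/-- Any set `K` of short pairs is outnumbered by its edges and those leaving the window. -/
theorem card_add_three_le (w : ShortestLong n E a b) (h : MinimalDense n E)
    {K : Finset (ℕ × ℕ)} (hK : K ⊆ shortPairs (b - a)) :
    K.card + 3 ≤ ∑ k ∈ K, edgeInd E a k.1 k.2 +
      ∑ i ∈ Finset.Ioo 0 (b - a), (outNbrs n E a b i).card := by
  have hab := w.five_le
  have h1 := h.card_incident (p := a) (q := b) (by omega) w.lt (w.lt_hull h)
  have h2 := w.card_incident_le h (p := 0) (q := b - a) (by omega) subset_rfl (fun k hk _ => hk)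
  rw [Nat.add_zero, show a + (b - a) = b by omega] at h2
  have h3 := card_shortPairs_le (l := b - a) (by omega)
  have h4 := Finset.sum_sdiff hK (f := fun k => edgeInd E a k.1 k.2)
  have h5 : ∑ k ∈ shortPairs (b - a) \ K, edgeInd E a k.1 k.2 ≤ (shortPairs (b - a) \ K).card := by
    simpa using Finset.sum_le_card_nsmul (shortPairs (b - a) \ K) _ 1
      (fun k _ => edgeInd_le_one E a k.1 k.2)
  have h6 := Finset.card_sdiff_add_card_eq_card hK
  omega

theorem sum_out_le (w : ShortestLong n E a b) (h : MinimalDense n E) :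
    ∑ i ∈ Finset.Ioo 0 (b - a), (outNbrs n E a b i).card ≤ 5 := by
  have hab := w.five_le
  have := h.crossing_le (a := a) (b := b) (p := 0) (q := b - a) (K := ∅) (by omega) (by omega)
    (by simpa [show a + (b - a) = b by omega] using w.mem) (by simp)
  simpa using this

end ShortestLong

theorem interleave_left {a b u v y z : ℕ} (hv : a < v) (hvu : v < u) (hu : u < b)
    (hz : z < a ∨ b < z) (hy : y < a ∨ b < y) (hyz : y ≠ z) :
    Interleave (sortedPair u z) (sortedPair v y) ∨ Interleave (sortedPair u z) (sortedPair b y) := by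
  simp only [Interleave, sortedPair]
  omega

theorem interleave_right {a b u v y z : ℕ} (hu : a < u) (hvu : u < v) (hv : v < b)
    (hz : z < a ∨ b < z) (hy : y < a ∨ b < y) (hyz : y ≠ z) :
    Interleave (sortedPair u z) (sortedPair v y) ∨ Interleave (sortedPair u z) (sortedPair a y) := by
  simp only [Interleave, sortedPair]
  omega

theorem mem_outNbrs {n : ℕ} {E : Finset (ℕ × ℕ)} {a b i x : ℕ} :
    x ∈ outNbrs n E a b i ↔ x < n ∧ (x < a ∨ b < x) ∧ sortedPair (a + i) x ∈ E := by
  simp [outNbrs]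

namespace ShortestLong

variable {n : ℕ} {E : Finset (ℕ × ℕ)} {a b : ℕ}

/-- If deleting the inner points of the window just fails to be affordable, then the
outer neighbours of these points are adjacent to both ends of the window. -/
theorem ends_adj (w : ShortestLong n E a b) (h : MinimalDense n E)
    (tight : (incident E a b).card ≤ 4 * (b - a - 1) + 1) {i y : ℕ} (hi : 0 < i) (hib : a + i < b)
    (hy : y ∈ outNbrs n E a b i) : sortedPair a y ∈ E ∧ sortedPair b y ∈ E := by
  obtain ⟨-, hout, hE⟩ := mem_outNbrs.1 hy
  have hinc : sortedPair (a + i) y ∈ incident E a b := by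
    refine Finset.mem_filter.2 ⟨hE, ?_⟩
    simp only [sortedPair]
    omega
  have hab := w.five_le
  constructor
  · by_contra hnew
    have e1 : pushOut a b (b - 1) (sortedPair (a + i) y).1 = (sortedPair a y).1 := by
      simp only [pushOut, sortedPair, min_def, max_def]; split_ifs <;> omega
    have e2 : pushOut a b (b - 1) (sortedPair (a + i) y).2 = (sortedPair a y).2 := by
      simp only [pushOut, sortedPair, min_def, max_def]; split_ifs <;> omega
    have := h.card_incident_of_reroute (by omega) w.lt (w.lt_hull h) (t := b - 1) (by omega)
      (by omega) hinc (by rw [e1, e2]; simp only [sortedPair]; omega) (by rwa [e1, e2])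
    omega
  · by_contra hnew
    have e1 : pushOut a b a (sortedPair (a + i) y).1 = (sortedPair b y).1 := by
      simp only [pushOut, sortedPair, min_def, max_def]; split_ifs <;> omega
    have e2 : pushOut a b a (sortedPair (a + i) y).2 = (sortedPair b y).2 := by
      simp only [pushOut, sortedPair, min_def, max_def]; split_ifs <;> omega
    have := h.card_incident_of_reroute (by omega) w.lt (w.lt_hull h) (t := a) (by omega)
      (by omega) hinc (by rw [e1, e2]; simp only [sortedPair]; omega) (by rwa [e1, e2])
    omega

theorem through_le (h : MinimalDense n E) {i z : ℕ} (hi : 0 < i) (hib : a + i < b)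
    (hz : z ∈ outNbrs n E a b i) {K F : Finset (ℕ × ℕ)}
    (hK : ∀ k ∈ K, k.1 < i ∧ i < k.2 ∧ a + k.2 ≤ b)
    (hF : ∀ f ∈ F, f ∈ E ∧ Interleave (sortedPair (a + i) z) f ∧ (f.1 < a ∨ b < f.2)) :
    ∑ k ∈ K, edgeInd E a k.1 k.2 + F.card ≤ 5 := by
  obtain ⟨-, hout, hE⟩ := mem_outNbrs.1 hz
  have hcard := card_localEdges (n := n) (E := E) (a := a) (b := b) (K := K) (S := ∅)
    (fun k hk => by have := hK k hk; omega) (by simp)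
  rw [Finset.sum_empty, Nat.add_zero] at hcard
  rw [← hcard, ← Finset.card_union_of_disjoint]
  · refine le_trans (Finset.card_le_card ?_) (h.crossings _ hE)
    intro e he
    rcases Finset.mem_union.1 he with he | he
    · obtain ⟨heE, ⟨k, hk, rfl⟩ | ⟨i, hi, -⟩⟩ := mem_localEdges.1 he
      · refine Finset.mem_filter.2 ⟨heE, ?_⟩
        have := hK k hk
        simp only [Interleave, sortedPair]
        omega
      · simp at hi
    · exact Finset.mem_filter.2 ⟨(hF e he).1, (hF e he).2.1⟩
  · rw [Finset.disjoint_left]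
    intro e he he'
    obtain ⟨heE, ⟨k, hk, rfl⟩ | ⟨i, hi, -⟩⟩ := mem_localEdges.1 he
    · have := hK k hk
      have := (hF _ he').2.2
      simp only at this
      omega
    · simp at hi

theorem exists_left (w : ShortestLong n E a b) (h : MinimalDense n E)
    (tight : (incident E a b).card ≤ 4 * (b - a - 1) + 1) {i j z : ℕ} (hj : 0 < j) (hji : j < i)
    (hib : a + i < b) (hz : z ∈ outNbrs n E a b i) (h2 : 2 ≤ (outNbrs n E a b j).card) :
    ∃ x y, (a < x ∧ x < a + i ∨ x = b) ∧ (y < a ∨ b < y) ∧ sortedPair x y ∈ E ∧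
      Interleave (sortedPair (a + i) z) (sortedPair x y) := by
  obtain ⟨y, hy, hyz⟩ := Finset.exists_mem_ne h2 z
  have hyo := mem_outNbrs.1 hy
  have hzo := mem_outNbrs.1 hz
  rcases interleave_left (a := a) (b := b) (u := a + i) (v := a + j) (y := y) (z := z) (by omega)
    (by omega) hib hzo.2.1 hyo.2.1 hyz with hc | hc
  · exact ⟨a + j, y, by omega, hyo.2.1, hyo.2.2, hc⟩
  · exact ⟨b, y, Or.inr rfl, hyo.2.1, (w.ends_adj h tight hj (by omega) hy).2, hc⟩

theorem exists_right (w : ShortestLong n E a b) (h : MinimalDense n E)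
    (tight : (incident E a b).card ≤ 4 * (b - a - 1) + 1) {i j z : ℕ} (hi : 0 < i) (hij : i < j)
    (hjb : a + j < b) (hz : z ∈ outNbrs n E a b i) (h2 : 2 ≤ (outNbrs n E a b j).card) :
    ∃ x y, (a + i < x ∧ x < b ∨ x = a) ∧ (y < a ∨ b < y) ∧ sortedPair x y ∈ E ∧
      Interleave (sortedPair (a + i) z) (sortedPair x y) := by
  obtain ⟨y, hy, hyz⟩ := Finset.exists_mem_ne h2 z
  have hyo := mem_outNbrs.1 hy
  have hzo := mem_outNbrs.1 hz
  rcases interleave_right (a := a) (b := b) (u := a + i) (v := a + j) (y := y) (z := z) (by omega)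
    (by omega) hjb hzo.2.1 hyo.2.1 hyz with hc | hc
  · exact ⟨a + j, y, by omega, hyo.2.1, hyo.2.2, hc⟩
  · exact ⟨a, y, Or.inr rfl, hyo.2.1, (w.ends_adj h tight (by omega) hjb hy).1, hc⟩

theorem through_left (w : ShortestLong n E a b) (h : MinimalDense n E)
    (tight : (incident E a b).card ≤ 4 * (b - a - 1) + 1) {i j : ℕ} (hj : 0 < j) (hji : j < i)
    (hib : a + i < b) {K : Finset (ℕ × ℕ)} (hK : ∀ k ∈ K, k.1 < i ∧ i < k.2 ∧ a + k.2 ≤ b)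
    (h1 : 1 ≤ (outNbrs n E a b i).card) (h2 : 2 ≤ (outNbrs n E a b j).card) :
    ∑ k ∈ K, edgeInd E a k.1 k.2 + 1 ≤ 5 := by
  obtain ⟨z, hz⟩ := Finset.card_pos.1 h1
  obtain ⟨x, y, hx, hy, hE, hc⟩ := w.exists_left h tight hj hji hib hz h2
  have := through_le h (F := {sortedPair x y}) (by omega) hib hz hK (by
    simp only [Finset.mem_singleton, forall_eq]
    refine ⟨hE, hc, ?_⟩
    simp only [sortedPair]
    omega)
  simpa using this

theorem through_right (w : ShortestLong n E a b) (h : MinimalDense n E)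
    (tight : (incident E a b).card ≤ 4 * (b - a - 1) + 1) {i j : ℕ} (hi : 0 < i) (hij : i < j)
    (hjb : a + j < b) {K : Finset (ℕ × ℕ)} (hK : ∀ k ∈ K, k.1 < i ∧ i < k.2 ∧ a + k.2 ≤ b)
    (h1 : 1 ≤ (outNbrs n E a b i).card) (h2 : 2 ≤ (outNbrs n E a b j).card) :
    ∑ k ∈ K, edgeInd E a k.1 k.2 + 1 ≤ 5 := by
  obtain ⟨z, hz⟩ := Finset.card_pos.1 h1
  obtain ⟨x, y, hx, hy, hE, hc⟩ := w.exists_right h tight hi hij hjb hz h2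
  have := through_le h (F := {sortedPair x y}) hi (by omega) hz hK (by
    simp only [Finset.mem_singleton, forall_eq]
    refine ⟨hE, hc, ?_⟩
    simp only [sortedPair]
    omega)
  simpa using this

theorem through_both (w : ShortestLong n E a b) (h : MinimalDense n E)
    (tight : (incident E a b).card ≤ 4 * (b - a - 1) + 1) {i j l : ℕ} (hj : 0 < j) (hji : j < i)
    (hil : i < l) (hlb : a + l < b) {K : Finset (ℕ × ℕ)}
    (hK : ∀ k ∈ K, k.1 < i ∧ i < k.2 ∧ a + k.2 ≤ b) (h1 : 1 ≤ (outNbrs n E a b i).card)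
    (h2 : 2 ≤ (outNbrs n E a b j).card) (h3 : 2 ≤ (outNbrs n E a b l).card) :
    ∑ k ∈ K, edgeInd E a k.1 k.2 + 2 ≤ 5 := by
  obtain ⟨z, hz⟩ := Finset.card_pos.1 h1
  obtain ⟨x, y, hx, hy, hE, hc⟩ := w.exists_left h tight hj hji (by omega) hz h2
  obtain ⟨x', y', hx', hy', hE', hc'⟩ := w.exists_right h tight (by omega) hil hlb hz h3
  have hne : sortedPair x y ≠ sortedPair x' y' := by
    rw [Ne, sortedPair_eq_iff]
    omega
  have := through_le h (F := {sortedPair x y, sortedPair x' y'}) (by omega) (by omega) hz hK (by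
    simp only [Finset.mem_singleton, Finset.mem_insert, forall_eq_or_imp, forall_eq]
    refine ⟨⟨hE, hc, ?_⟩, hE', hc', ?_⟩ <;>
    · simp only [sortedPair]
      omega)
  rwa [Finset.card_pair hne] at this

theorem edgeInd_cross_le (h : MinimalDense n E) {l : ℕ} (hl : a + l ≤ b) {p q : ℕ}
    (K : Finset (ℕ × ℕ)) (hpq : p < q ∧ q ≤ l ∧ ∀ k ∈ K, Interleave (p, q) k ∧ k.2 ≤ l)
    (hx : edgeInd E a p q = 1) :
    ∑ k ∈ K, edgeInd E a k.1 k.2 + ∑ i ∈ Finset.Ioo p q, (outNbrs n E a b i).card ≤ 5 := by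
  refine h.crossing_le hpq.1 (by omega) (mem_of_edgeInd hx) fun k hk => ?_
  have := hpq.2.2 k hk
  exact ⟨this.1, by omega⟩

theorem five_lt (w : ShortestLong n E a b) (h : MinimalDense n E) : b ≠ a + 5 := by
  intro hb
  have hba : b - a = 5 := by omega
  have hbn := w.lt
  have hull := w.lt_hull h
  have I4 : Finset.Ioo 0 5 = {1, 2, 3, 4} := by decide
  have I04 : Finset.Ioo 0 4 = {1, 2, 3} := by decide
  have I15 : Finset.Ioo 1 5 = {2, 3, 4} := by decide
  have I03 : Finset.Ioo 0 3 = {1, 2} := by decide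
  have I14 : Finset.Ioo 1 4 = {2, 3} := by decide
  have I25 : Finset.Ioo 2 5 = {3, 4} := by decide
  have I02 : Finset.Ioo 0 2 = {1} := by decide
  have I13 : Finset.Ioo 1 3 = {2} := by decide
  have I24 : Finset.Ioo 2 4 = {3} := by decide
  have I35 : Finset.Ioo 3 5 = {4} := by decide
  have le := edgeInd_le_one E a
  have hl : a + 5 ≤ b := hb.ge
  have tot := w.card_add_three_le h
    (K := {(0, 2), (0, 3), (0, 4), (1, 3), (1, 4), (1, 5), (2, 4), (2, 5), (3, 5)})
    (by rw [hba]; decide)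
  have out := w.sum_out_le h
  rw [hba, I4] at tot out
  have c02 := edgeInd_cross_le h hl (p := 0) (q := 2) {(1, 3), (1, 4), (1, 5)} (by decide)
  have c03 := edgeInd_cross_le h hl (p := 0) (q := 3) {(1, 4), (1, 5), (2, 4), (2, 5)} (by decide)
  have c04 := edgeInd_cross_le h hl (p := 0) (q := 4) {(1, 5), (2, 5), (3, 5)} (by decide)
  have c13 := edgeInd_cross_le h hl (p := 1) (q := 3) {(0, 2), (2, 4), (2, 5)} (by decide)
  have c14 := edgeInd_cross_le h hl (p := 1) (q := 4) {(0, 2), (0, 3), (2, 5), (3, 5)} (by decide)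
  have c15 := edgeInd_cross_le h hl (p := 1) (q := 5) {(0, 2), (0, 3), (0, 4)} (by decide)
  have c25 := edgeInd_cross_le h hl (p := 2) (q := 5) {(0, 3), (1, 3), (0, 4), (1, 4)} (by decide)
  have c35 := edgeInd_cross_le h hl (p := 3) (q := 5) {(0, 4), (1, 4), (2, 4)} (by decide)
  have deg : ∀ p ≤ 3, 5 ≤ (incident E (a + p) (a + (p + 2))).card := by
    intro p hp
    have := h.card_incident (p := a + p) (q := a + (p + 2)) (by omega) (by omega) (by omega)
    omega
  have d1 := (deg 0 (by omega)).trans (w.card_incident_le h (p := 0) (q := 2) (by omega)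
    (K := {(0, 1), (1, 2), (1, 3), (1, 4), (1, 5)}) (by rw [hba]; decide) (by rw [hba]; decide))
  have d2 := (deg 1 (by omega)).trans (w.card_incident_le h (p := 1) (q := 3) (by omega)
    (K := {(0, 2), (1, 2), (2, 3), (2, 4), (2, 5)}) (by rw [hba]; decide) (by rw [hba]; decide))
  have d3 := (deg 2 (by omega)).trans (w.card_incident_le h (p := 2) (q := 4) (by omega)
    (K := {(0, 3), (1, 3), (2, 3), (3, 4), (3, 5)}) (by rw [hba]; decide) (by rw [hba]; decide))
  have d4 := (deg 3 (by omega)).trans (w.card_incident_le h (p := 3) (q := 5) (by omega)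
    (K := {(0, 4), (1, 4), (2, 4), (3, 4), (4, 5)}) (by rw [hba]; decide) (by rw [hba]; decide))
  have m23 : edgeInd E a 1 4 = 0 → 10 ≤ (incident E (a + 1) (a + 4)).card := by
    intro h14
    have e1 : pushOut (a + 1) (a + 4) (a + 2) (a + 2) = a + 1 := by simp [pushOut]
    have e2 : pushOut (a + 1) (a + 4) (a + 2) (a + 3) = a + 4 := by simp [pushOut]
    have := h.card_incident_of_reroute (p := a + 1) (q := a + 4) (t := a + 2) (e₀ := (a + 2, a + 3))
      (by omega) (by omega) (by omega) (by omega) (by omega)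
      (Finset.mem_filter.2 ⟨h.side (a + 2) (by omega), by simp⟩)
      (by simp only [e1, e2]; omega) (by simpa only [e1, e2] using notMem_of_edgeInd h14)
    omega
  have m23' := w.card_incident_le h (p := 1) (q := 4) (by omega)
    (K := {(0, 2), (0, 3), (1, 2), (1, 3), (2, 3), (2, 4), (2, 5), (3, 4), (3, 5)})
    (by rw [hba]; decide) (by rw [hba]; decide)
  have tot' := w.card_incident_le h (p := 0) (q := 5) (by omega)
    (K := {(0, 1), (1, 2), (2, 3), (3, 4), (4, 5),
      (0, 2), (0, 3), (0, 4), (1, 3), (1, 4), (1, 5), (2, 4), (2, 5), (3, 5)})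
    (by rw [hba]; decide) (by rw [hba]; decide)
  have x05 : edgeInd E a 0 5 = 1 := by
    have := w.mem
    rw [hb] at this
    simp [edgeInd, this]
  rw [Nat.add_zero, ← hb] at tot'
  rw [I02] at c02 d1
  rw [I03] at c03
  rw [I04] at c04
  rw [I13] at c13 d2
  rw [I14] at c14 m23'
  rw [I15] at c15
  rw [I24] at d3
  rw [I25] at c25
  rw [I35] at c35 d4
  rw [I4] at tot'
  have l01 := le 0 1
  have l12 := le 1 2
  have l23 := le 2 3
  have l34 := le 3 4
  have l45 := le 4 5
  simp at tot out c02 c03 c04 c13 c14 c15 c25 c35 d1 d2 d3 d4 m23' tot'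
  have tight : (incident E a b).card ≤ 4 * (b - a - 1) + 1 := by
    by_contra hcon
    exact arith_four_tight _ _ _ _ _ _ _ _ _ (outNbrs n E a b 1).card
      (outNbrs n E a b 2).card (outNbrs n E a b 3).card (outNbrs n E a b 4).card
      (le 0 2) (le 0 3) (le 0 4) (le 1 3) (le 1 4) (le 1 5) (le 2 4) (le 2 5) (le 3 5) (by omega)
      (by omega) (fun x => by have := c03 x; omega) (fun x => by have := c04 x; omega)
      (fun x => by have := c15 x; omega) (fun x => by have := c25 x; omega)
  have hK3 : ∀ k ∈ ({(0, 4), (1, 4), (2, 4), (1, 5), (2, 5), (0, 5)} : Finset (ℕ × ℕ)),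
      k.1 < 3 ∧ 3 < k.2 ∧ a + k.2 ≤ b := by
    rw [hb]; simp
  have hK2 : ∀ k ∈ ({(0, 3), (1, 3), (0, 4), (1, 4), (1, 5), (0, 5)} : Finset (ℕ × ℕ)),
      k.1 < 2 ∧ 2 < k.2 ∧ a + k.2 ≤ b := by
    rw [hb]; simp
  have l3 := w.through_left h tight (i := 3) (j := 1) (by omega) (by omega) (by omega) hK3
  have r3 := w.through_right h tight (i := 3) (j := 4) (by omega) (by omega) (by omega) hK3
  have lr3 := w.through_both h tight (i := 3) (j := 1) (l := 4) (by omega) (by omega) (by omega)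
    (by omega) hK3
  have l2 := w.through_left h tight (i := 2) (j := 1) (by omega) (by omega) (by omega) hK2
  have r2 := w.through_right h tight (i := 2) (j := 4) (by omega) (by omega) (by omega) hK2
  have lr2 := w.through_both h tight (i := 2) (j := 1) (l := 4) (by omega) (by omega) (by omega)
    (by omega) hK2
  simp [x05, -Finset.one_le_card] at l3 r3 lr3 l2 r2 lr2
  exact arith_four _ _ _ _ _ _ _ _ _ (outNbrs n E a b 1).card
      (outNbrs n E a b 2).card (outNbrs n E a b 3).card (outNbrs n E a b 4).card
      (le 0 2) (le 0 3) (le 0 4) (le 1 3) (le 1 4) (le 1 5) (le 2 4) (le 2 5) (le 3 5) (by omega)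
      (by omega) (fun x => by have := c03 x; omega) (fun x => by have := c04 x; omega)
      (fun x => by have := c14 x; omega) (fun x => by have := c15 x; omega)
      (fun x => by have := c25 x; omega) (fun x => by have := c02 x; omega)
      (fun x => by have := c13 x; omega) (fun x => by have := c35 x; omega) (by omega) (by omega)
      (by omega) (by omega) (fun x => by have := m23 x; omega)
      (fun x y => by have := l3 x y; omega) (fun x y => by have := r3 x y; omega)
      (fun x y z => by have := lr3 x y z; omega) (fun x y => by have := l2 x y; omega)
      (fun x y => by have := r2 x y; omega) (fun x y z => by have := lr2 x y z; omega)

theorem six_lt (w : ShortestLong n E a b) (h : MinimalDense n E) : b ≠ a + 6 := by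
  intro hb
  have hba : b - a = 6 := by omega
  have I4 : Finset.Ioo 0 6 = {1, 2, 3, 4, 5} := by decide
  have I02 : Finset.Ioo 0 2 = {1} := by decide
  have I03 : Finset.Ioo 0 3 = {1, 2} := by decide
  have I04 : Finset.Ioo 0 4 = {1, 2, 3} := by decide
  have I14 : Finset.Ioo 1 4 = {2, 3} := by decide
  have I15 : Finset.Ioo 1 5 = {2, 3, 4} := by decide
  have I25 : Finset.Ioo 2 5 = {3, 4} := by decide
  have I26 : Finset.Ioo 2 6 = {3, 4, 5} := by decide
  have I36 : Finset.Ioo 3 6 = {4, 5} := by decide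
  have I46 : Finset.Ioo 4 6 = {5} := by decide
  have le := edgeInd_le_one E a
  have hl : a + 6 ≤ b := hb.ge
  have tot := w.card_add_three_le h
    (K := {(0, 2), (0, 3), (0, 4), (1, 3), (1, 4), (1, 5), (2, 4), (2, 5), (2, 6), (3, 5), (3, 6),
      (4, 6)}) (by rw [hba]; decide)
  have out := w.sum_out_le h
  have c02 := edgeInd_cross_le h hl (p := 0) (q := 2) {(1, 3), (1, 4), (1, 5)} (by decide)
  have c03 := edgeInd_cross_le h hl (p := 0) (q := 3) {(1, 4), (1, 5), (2, 4), (2, 5), (2, 6)}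
    (by decide)
  have c04 := edgeInd_cross_le h hl (p := 0) (q := 4) {(1, 5), (2, 5), (2, 6), (3, 5), (3, 6)}
    (by decide)
  have c14 := edgeInd_cross_le h hl (p := 1) (q := 4)
    {(0, 2), (0, 3), (2, 5), (2, 6), (3, 5), (3, 6)} (by decide)
  have c15 := edgeInd_cross_le h hl (p := 1) (q := 5)
    {(0, 2), (0, 3), (0, 4), (2, 6), (3, 6), (4, 6)} (by decide)
  have c25 := edgeInd_cross_le h hl (p := 2) (q := 5)
    {(0, 3), (1, 3), (0, 4), (1, 4), (3, 6), (4, 6)} (by decide)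
  have c26 := edgeInd_cross_le h hl (p := 2) (q := 6) {(0, 3), (1, 3), (0, 4), (1, 4), (1, 5)}
    (by decide)
  have c36 := edgeInd_cross_le h hl (p := 3) (q := 6) {(0, 4), (1, 4), (2, 4), (1, 5), (2, 5)}
    (by decide)
  have c46 := edgeInd_cross_le h hl (p := 4) (q := 6) {(1, 5), (2, 5), (3, 5)} (by decide)
  rw [hba, I4] at tot out
  rw [I02] at c02
  rw [I03] at c03
  rw [I04] at c04
  rw [I14] at c14
  rw [I15] at c15
  rw [I25] at c25
  rw [I26] at c26
  rw [I36] at c36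
  rw [I46] at c46
  simp at tot out c02 c03 c04 c14 c15 c25 c26 c36 c46
  exact arith_five _ _ _ _ _ _ _ _ _ _ _ _ (outNbrs n E a b 1).card (outNbrs n E a b 2).card
    (outNbrs n E a b 3).card (outNbrs n E a b 4).card (outNbrs n E a b 5).card
    (le 0 2) (le 0 3) (le 0 4) (le 1 3) (le 1 4) (le 1 5) (le 2 4) (le 2 5) (le 2 6) (le 3 5)
    (le 3 6) (le 4 6) (by omega) (by omega)
    (fun x => by have := c03 x; omega) (fun x => by have := c36 x; omega)
    (fun x => by have := c02 x; omega) (fun x => by have := c46 x; omega)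
    (fun x => by have := c04 x; omega) (fun x => by have := c14 x; omega)
    (fun x => by have := c15 x; omega) (fun x => by have := c25 x; omega)
    (fun x => by have := c26 x; omega)

theorem le_six (w : ShortestLong n E a b) (h : MinimalDense n E) : b ≤ a + 6 := by
  by_contra hb
  have le := edgeInd_le_one E a
  have hl : a + 7 ≤ b := by omega
  have tot := w.card_add_three_le h
    (K := {(0, 2), (0, 3), (0, 4), (1, 3), (1, 4), (1, 5), (2, 5), (2, 6), (3, 5), (3, 6), (3, 7),
      (4, 6), (4, 7), (5, 7)}) (by
        refine Finset.Subset.trans (s₂ := shortPairs 7) (by decide) fun k hk => ?_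
        have := mem_shortPairs.1 hk
        exact mem_shortPairs.2 (by omega))
  have out := w.sum_out_le h
  have c14 := edgeInd_cross_le h hl (p := 1) (q := 4)
    {(0, 2), (0, 3), (2, 5), (2, 6), (3, 5), (3, 6), (3, 7)} (by decide)
  have c15 := edgeInd_cross_le h hl (p := 1) (q := 5)
    {(0, 2), (0, 3), (0, 4), (2, 6), (3, 6), (3, 7), (4, 6), (4, 7)} (by decide)
  have c26 := edgeInd_cross_le h hl (p := 2) (q := 6)
    {(0, 3), (1, 3), (3, 7), (0, 4), (1, 4), (4, 7), (1, 5), (5, 7)} (by decide)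
  generalize ∑ i ∈ Finset.Ioo 0 (b - a), (outNbrs n E a b i).card = o at tot out
  generalize ∑ i ∈ Finset.Ioo 1 4, (outNbrs n E a b i).card = o₁ at c14
  generalize ∑ i ∈ Finset.Ioo 1 5, (outNbrs n E a b i).card = o₂ at c15
  generalize ∑ i ∈ Finset.Ioo 2 6, (outNbrs n E a b i).card = o₃ at c26
  simp at tot c14 c15 c26
  exact arith_six _ _ _ _ _ _ _ _ _ _ _ _ _ _ o (le 0 3) (le 0 4) (le 1 3) (le 1 4)
    (le 1 5) (le 2 5) (le 2 6) (le 3 5) (le 3 6) (le 4 6) (le 3 7) (le 4 7) (le 5 7) (le 0 2)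
    (by omega) (by omega) (fun x => by have := c14 x; omega) (fun x => by have := c15 x; omega)
    (fun x => by have := c26 x; omega)

end ShortestLong

theorem not_minimalDense {n : ℕ} {E : Finset (ℕ × ℕ)} (h : MinimalDense n E) : False := by
  obtain ⟨a, b, w⟩ := h.exists_shortestLong
  have := w.five_le
  have := w.five_lt h
  have := w.six_lt h
  have := w.le_six h
  omega

/-- Adding the hull edges to a drawing does not create crossings. -/
theorem FiveDrawing.union_hull {n : ℕ} {E H : Finset (ℕ × ℕ)} (h : FiveDrawing n E)
    (hH : ∀ e ∈ H, e.1 < e.2 ∧ e.2 < n ∧ (e.2 = e.1 + 1 ∨ e = (0, n - 1))) :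
    FiveDrawing n (E ∪ H) := by
  have lt : ∀ e ∈ E ∪ H, e.1 < e.2 := fun e he =>
    (Finset.mem_union.1 he).elim (h.lt e) fun he => (hH e he).1
  have bound : ∀ e ∈ E ∪ H, e.2 < n := fun e he =>
    (Finset.mem_union.1 he).elim (h.bound e) fun he => (hH e he).2.1
  have free : ∀ e ∈ H, ∀ f ∈ E ∪ H, ¬ Interleave e f := by
    intro e he f hf
    have := bound f hf
    obtain ⟨h1, h2, h3 | rfl⟩ := hH e he <;> simp only [Interleave] <;> omega
  have symm : ∀ e f, Interleave e f → Interleave f e := fun e f h => Or.symm h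
  refine ⟨lt, bound, fun e he => ?_⟩
  rcases Finset.mem_union.1 he with heE | heH
  · refine le_trans (Finset.card_le_card fun f hf => ?_) (h.crossings e heE)
    obtain ⟨hf, hc⟩ := Finset.mem_filter.1 hf
    rcases Finset.mem_union.1 hf with hfE | hfH
    · exact Finset.mem_filter.2 ⟨hfE, hc⟩
    · exact absurd (symm _ _ hc) (free f hfH e he)
  · rw [Finset.filter_false_of_mem (free e heH)]
    simp

theorem FiveDrawing.card_le {n : ℕ} (hn : 3 ≤ n) {E : Finset (ℕ × ℕ)} (h : FiveDrawing n E) :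
    E.card ≤ 4 * n - 9 := by
  induction n using Nat.strong_induction_on generalizing E with
  | _ n ih =>
    by_cases h6 : 6 ≤ n
    · by_contra hcon
      let H : Finset (ℕ × ℕ) := insert (0, n - 1) ((Finset.range (n - 1)).image fun i => (i, i + 1))
      have hH : ∀ e ∈ H, e.1 < e.2 ∧ e.2 < n ∧ (e.2 = e.1 + 1 ∨ e = (0, n - 1)) := by
        simp only [H, Finset.mem_insert, Finset.mem_image, Finset.mem_range]
        rintro e (rfl | ⟨i, hi, rfl⟩)
        · simp only [or_true, and_true]
          omega
        · simp only [true_or, and_true]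
          omega
      have hcard := Finset.card_le_card (Finset.subset_union_left (s₁ := E) (s₂ := H))
      refine not_minimalDense (n := n) (E := E ∪ H) ⟨h.union_hull hH, h6, by omega, ?_, ?_, ?_⟩
      · simp [H]
      · intro i hi
        refine Finset.mem_union_right _ (Finset.mem_insert_of_mem (Finset.mem_image.2 ⟨i, ?_, rfl⟩))
        exact Finset.mem_range.2 (by omega)
      · exact fun n' E' h3 hlt h' => ih n' hlt h3 h'
    · have hsub : E ⊆ (Finset.range n ×ˢ Finset.range n).filter fun k => k.1 < k.2 := by
        intro e he
        have := h.lt e he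
        have := h.bound e he
        simp only [Finset.mem_filter, Finset.mem_product, Finset.mem_range]
        omega
      refine (Finset.card_le_card hsub).trans ?_
      obtain rfl | rfl | rfl : n = 3 ∨ n = 4 ∨ n = 5 := by omega
      all_goals decide

theorem cycBtw_iff {n : ℕ} {a b x : Fin n} (hab : a < b) : cycBtw n a b x ↔ a < x ∧ x < b := by
  have key : ∀ y : Fin n, (y.val + n - a.val) % n =
      if a.val ≤ y.val then y.val - a.val else y.val + n - a.val := by
    intro y
    split_ifs with h
    · rw [show y.val + n - a.val = (y.val - a.val) + n by omega, Nat.add_mod_right,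
        Nat.mod_eq_of_lt (by omega)]
    · exact Nat.mod_eq_of_lt (by omega)
  simp only [cycBtw, key, Fin.lt_def] at hab ⊢
  split_ifs <;> omega

/-- The position pair of an edge. -/
def posPair {n : ℕ} (σ : Fin n → Fin n) : Sym2 (Fin n) → ℕ × ℕ :=
  Sym2.lift ⟨fun a b => sortedPair (σ a) (σ b), fun a b => by
    simp only [sortedPair, min_comm, max_comm]⟩

theorem posPair_mk {n : ℕ} (σ : Fin n → Fin n) (a b : Fin n) :
    posPair σ s(a, b) = sortedPair (σ a) (σ b) := rfl

theorem posPair_injective {n : ℕ} {σ : Fin n → Fin n} (hσ : Function.Injective σ) :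
    Function.Injective (posPair σ) := by
  intro e f
  induction e with | _ a b
  induction f with | _ c d
  intro h
  simp only [posPair_mk, sortedPair_eq_iff, Fin.val_inj, hσ.eq_iff] at h
  exact Sym2.eq_iff.2 h

theorem exists_mk_lt {n : ℕ} {σ : Fin n → Fin n} (hσ : Function.Injective σ) {e : Sym2 (Fin n)}
    (he : ¬ e.IsDiag) : ∃ a b, e = s(a, b) ∧ σ a < σ b := by
  induction e with | _ a b
  rcases lt_or_gt_of_ne (hσ.ne (Sym2.mk_isDiag_iff.not.1 he)) with h | h
  · exact ⟨a, b, rfl, h⟩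
  · exact ⟨b, a, Sym2.eq_swap, h⟩

theorem crossing_of_interleave {n : ℕ} {σ : Fin n → Fin n} (hσ : Function.Injective σ)
    {e f : Sym2 (Fin n)} (he : ¬ e.IsDiag) (hf : ¬ f.IsDiag)
    (h : Interleave (posPair σ e) (posPair σ f)) : crossing n σ e f := by
  obtain ⟨a, b, rfl, hab⟩ := exists_mk_lt hσ he
  obtain ⟨c, d, rfl, hcd⟩ := exists_mk_lt hσ hf
  rw [posPair_mk, posPair_mk] at h
  simp only [Interleave, sortedPair, Fin.lt_def] at h hab hcd
  refine ⟨a, b, c, d, rfl, rfl, ?_, ?_, ?_, ?_, ?_, ?_, ?_⟩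
  iterate 6 rintro rfl; omega
  rw [cycBtw_iff hab, cycBtw_iff hab]
  simp only [Fin.lt_def]
  omega

theorem OuterKPlanarOrd.fiveDrawing {n : ℕ} {σ : Fin n → Fin n} (hσ : Function.Injective σ)
    {G : SimpleGraph (Fin n)} (h : OuterKPlanarOrd n 5 σ G) :
    FiveDrawing n (G.edgeSet.toFinite.toFinset.image (posPair σ)) := by
  refine ⟨?_, ?_, ?_⟩ <;> simp only [Finset.mem_image, Set.Finite.mem_toFinset] <;>
    rintro _ ⟨e, he, rfl⟩
  · obtain ⟨a, b, rfl, hab⟩ := exists_mk_lt hσ (G.not_isDiag_of_mem_edgeSet he)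
    simp only [posPair_mk, sortedPair, Fin.lt_def] at hab ⊢
    omega
  · induction e with | _ a b
    simp only [posPair_mk, sortedPair]
    omega
  · refine le_trans ?_ (h e he)
    rw [Set.ncard_eq_toFinset_card _ (Set.toFinite _)]
    refine le_trans (Finset.card_le_card fun f' hf' => ?_)
      (Finset.card_image_le (f := posPair σ))
    simp only [Finset.mem_filter, Finset.mem_image, Set.Finite.mem_toFinset] at hf' ⊢
    obtain ⟨⟨f, hf, rfl⟩, hc⟩ := hf'
    exact ⟨f, ⟨hf, crossing_of_interleave hσ (G.not_isDiag_of_mem_edgeSet he)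
      (G.not_isDiag_of_mem_edgeSet hf) hc⟩, rfl⟩

/-- An `n`-vertex outer `5`-planar graph has at most `4n - 9` edges. -/
theorem outer_five_planar_edge_bound (n : ℕ) (hn : 3 ≤ n) (G : SimpleGraph (Fin n))
    (hG : IsOuterKPlanar n 5 G) :
    G.edgeSet.ncard ≤ 4 * n - 9 := by
  obtain ⟨σ, hσ⟩ := hG
  have := (hσ.fiveDrawing σ.injective).card_le hn
  rwa [Finset.card_image_of_injective _ (posPair_injective σ.injective),
    ← Set.ncard_eq_toFinset_card] at this
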